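/- Every subset of ℝ definable (with parameters) in the ordered field (ℝ, +, ·, 0, 1, ≤) that has empty interior is finite. -/

import Mathlib

open FirstOrder FirstOrder.Language

/-- The structure on `ℝ` for the language of ordered rings `ring ⊕ order`, interpreting
the ring symbols by the usual field operations and `≤` by the usual order. -/
noncomputable def realOrderedRingStructure :
    (Language.ring.sum Language.order).Structure ℝ :=
  letI := FirstOrder.Ring.compatibleRingOfRing ℝ
  letI := Language.orderStructure ℝ
  inferInstance

section TarskiAux
open Polynomial

/-- An order isomorphism moving `c` up to `d`, supported in `(l, r)`. -/
lemma bump_lt (l c d r : ℝ) (hlc : l < c) (hcd : c < d) (hdr : d < r) :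
    ∃ g : ℝ ≃o ℝ, g c = d ∧ ∀ t, (t ≤ l ∨ r ≤ t) → g t = t := by
  set α := (d - l) / (c - l) with hα
  set β := (r - d) / (r - c) with hβ
  have h1 : 1 < α := by rw [hα, lt_div_iff₀ (by linarith)]; linarith
  have h2 : 0 < β := by rw [hβ]; apply div_pos <;> linarith
  have h3 : β < 1 := by rw [hβ, div_lt_one (by linarith)]; linarith
  let f : ℝ → ℝ := fun t => max t (min (l + α * (t - l)) (r - β * (r - t)))
  have hmono : StrictMono f := by
    intro s t hst
    have a1 : l + α * (s - l) < l + α * (t - l) := by nlinarith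
    have a2 : r - β * (r - s) < r - β * (r - t) := by nlinarith
    exact max_lt_max hst (min_lt_min a1 a2)
  have hcont : Continuous f := by fun_prop
  have hout : ∀ t, (t ≤ l ∨ r ≤ t) → f t = t := by
    rintro t (ht | ht)
    · apply max_eq_left
      apply (min_le_left _ _).trans
      nlinarith
    · apply max_eq_left
      apply (min_le_right _ _).trans
      nlinarith
  have hsurj : Function.Surjective f := by
    apply hcont.surjective
    · apply Filter.tendsto_id.congr'
      filter_upwards [Filter.eventually_ge_atTop r] with t ht
      exact (hout t (Or.inr ht)).symm
    · apply Filter.tendsto_id.congr'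
      filter_upwards [Filter.eventually_le_atBot l] with t ht
      exact (hout t (Or.inl ht)).symm
  refine ⟨hmono.orderIsoOfSurjective f hsurj, ?_, hout⟩
  have e1 : l + α * (c - l) = d := by
    rw [hα, div_mul_cancel₀ _ (by linarith)]; ring
  have e2 : r - β * (r - c) = d := by
    rw [hβ, div_mul_cancel₀ _ (by linarith)]; ring
  change max c (min (l + α * (c - l)) (r - β * (r - c))) = d
  rw [e1, e2, min_self, max_eq_right hcd.le]

lemma finset_gap (F : Finset ℝ) (c d : ℝ) (h : ∀ z ∈ F, ¬ (c ≤ z ∧ z ≤ d)) :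
    ∃ l r, l < c ∧ d < r ∧ ∀ z ∈ F, z ≤ l ∨ r ≤ z := by
  induction F using Finset.induction_on with
  | empty => exact ⟨c - 1, d + 1, by linarith, by linarith, by simp⟩
  | insert a s ha ih =>
    obtain ⟨l, r, hl, hr, hz⟩ := ih (fun z hz => h z (Finset.mem_insert_of_mem hz))
    have := h a (Finset.mem_insert_self _ _)
    by_cases hac : a < c
    · refine ⟨max l a, r, max_lt hl hac, hr, ?_⟩
      intro z hz'
      rcases Finset.mem_insert.1 hz' with rfl | hz'
      · left; exact le_max_right _ _
      · rcases hz z hz' with h | h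
        · left; exact h.trans (le_max_left _ _)
        · right; exact h
    · have hda : d < a := by
        by_contra hh
        exact this ⟨not_lt.1 hac, not_lt.1 hh⟩
      refine ⟨l, min r a, hl, lt_min hr hda, ?_⟩
      intro z hz'
      rcases Finset.mem_insert.1 hz' with rfl | hz'
      · right; exact min_le_right _ _
      · rcases hz z hz' with h | h
        · left; exact h
        · right; exact (min_le_left _ _).trans h

lemma bump (F : Finset ℝ) (c d : ℝ) (h : ∀ z ∈ F, ¬ (min c d ≤ z ∧ z ≤ max c d)) :
    ∃ g : ℝ ≃o ℝ, g c = d ∧ ∀ z ∈ F, g z = z := by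
  rcases lt_trichotomy c d with hcd | rfl | hcd
  · rw [min_eq_left hcd.le, max_eq_right hcd.le] at h
    obtain ⟨l, r, hl, hr, hz⟩ := finset_gap F c d h
    obtain ⟨g, hg, hg'⟩ := bump_lt l c d r hl hcd hr
    exact ⟨g, hg, fun z hz' => hg' z (hz z hz')⟩
  · exact ⟨OrderIso.refl ℝ, rfl, fun z _ => rfl⟩
  · rw [min_eq_right hcd.le, max_eq_left hcd.le] at h
    obtain ⟨l, r, hl, hr, hz⟩ := finset_gap F d c h
    obtain ⟨g, hg, hg'⟩ := bump_lt l d c r hl hcd hr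
    refine ⟨g.symm, by rw [← hg]; simp, fun z hz' => ?_⟩
    rw [OrderIso.symm_apply_eq, hg' z (hz z hz')]

/-- If no zero in an interval, sign is constant. -/
lemma sign_eq_of_no_zero (q : ℝ → ℝ) (hq : Continuous q) (a b : ℝ) (hab : a ≤ b)
    (h : ∀ z, a ≤ z → z ≤ b → q z ≠ 0) : SignType.sign (q a) = SignType.sign (q b) := by
  have ha := h a le_rfl hab
  have hb := h b hab le_rfl
  rcases lt_or_gt_of_ne ha with ha' | ha' <;> rcases lt_or_gt_of_ne hb with hb' | hb'
  · rw [sign_neg ha', sign_neg hb']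
  · obtain ⟨z, hz, hz0⟩ := intermediate_value_Icc hab hq.continuousOn ⟨ha'.le, hb'.le⟩
    exact absurd hz0 (h z hz.1 hz.2)
  · obtain ⟨z, hz, hz0⟩ := intermediate_value_Icc' hab hq.continuousOn ⟨hb'.le, ha'.le⟩
    exact absurd hz0 (h z hz.1 hz.2)
  · rw [sign_pos ha', sign_pos hb']

lemma sign_comp_fix (q : ℝ → ℝ) (hq : Continuous q) (g : ℝ ≃o ℝ)
    (hg : ∀ z, q z = 0 → g z = z) (t : ℝ) :
    SignType.sign (q (g t)) = SignType.sign (q t) := by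
  by_cases h0 : q t = 0
  · rw [hg t h0]
  rcases le_total t (g t) with h | h
  · symm
    apply sign_eq_of_no_zero q hq _ _ h
    intro z hz1 hz2 hz
    have h1 := hg z hz
    have : t ≠ z := by rintro rfl; exact h0 hz
    have h2 := g.lt_iff_lt.2 (lt_of_le_of_ne hz1 this)
    linarith
  · apply sign_eq_of_no_zero q hq _ _ h
    intro z hz1 hz2 hz
    have h1 := hg z hz
    have : z ≠ t := by rintro rfl; exact h0 hz
    have h2 := g.lt_iff_lt.2 (lt_of_le_of_ne hz2 this)
    linarith

lemma neighbors (Z : Finset ℝ) (m M : ℝ) (hm : m ∈ Z) (hM : M ∈ Z) (t : ℝ) (ht : t ∉ Z)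
    (h1 : m < t) (h2 : t < M) :
    ∃ a ∈ Z, ∃ b ∈ Z, a < t ∧ t < b ∧ ∀ z ∈ Z, ¬ (a < z ∧ z < b) := by
  obtain ⟨a, ha, ha'⟩ := (Z.filter (· < t)).exists_max_image id ⟨m, by simp [hm, h1]⟩
  obtain ⟨b, hb, hb'⟩ := (Z.filter (t < ·)).exists_min_image id ⟨M, by simp [hM, h2]⟩
  simp only [Finset.mem_filter, id] at ha ha' hb hb'
  refine ⟨a, ha.1, b, hb.1, ha.2, hb.2, fun z hz ⟨hz1, hz2⟩ => ?_⟩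
  rcases lt_trichotomy z t with h | rfl | h
  · linarith [ha' z ⟨hz, h⟩]
  · exact ht hz
  · linarith [hb' z ⟨hz, h⟩]

/-- strict monotonicity from the gap hypothesis -/
lemma gap_mono (Z : Finset ℝ) (f : ℝ → ℝ) (hf : Continuous f)
    (hfi : ∀ u v, u < v → (∀ z ∈ Z, ¬ (u < z ∧ z < v)) → f u ≠ f v)
    (a b : ℝ) (hab : a < b) (hgap : ∀ z ∈ Z, ¬ (a < z ∧ z < b)) :
    StrictMonoOn f (Set.Icc a b) ∨ StrictAntiOn f (Set.Icc a b) := by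
  apply hf.continuousOn.strictMonoOn_of_injOn_Icc' hab.le
  intro u hu v hv huv
  by_contra hne
  rcases lt_or_gt_of_ne hne with h | h
  · exact hfi u v h (fun z hz hh => hgap z hz ⟨by linarith [hu.1], by linarith [hv.2]⟩) huv
  · exact hfi v u h (fun z hz hh => hgap z hz ⟨by linarith [hv.1], by linarith [hu.2]⟩) huv.symm

lemma sign_interior_pos (f : ℝ → ℝ) (a b t : ℝ) (h1 : a < t) (h2 : t < b)
    (hm : StrictMonoOn f (Set.Icc a b) ∨ StrictAntiOn f (Set.Icc a b))
    (ha : 0 ≤ f a) (hb : 0 ≤ f b) : 0 < f t := by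
  have A : a ∈ Set.Icc a b := ⟨le_rfl, by linarith⟩
  have B : b ∈ Set.Icc a b := ⟨by linarith, le_rfl⟩
  have T : t ∈ Set.Icc a b := ⟨h1.le, h2.le⟩
  rcases hm with hm | hm
  · linarith [hm A T h1]
  · linarith [hm T B h2]

lemma sign_interior_neg (f : ℝ → ℝ) (a b t : ℝ) (h1 : a < t) (h2 : t < b)
    (hm : StrictMonoOn f (Set.Icc a b) ∨ StrictAntiOn f (Set.Icc a b))
    (ha : f a ≤ 0) (hb : f b ≤ 0) : f t < 0 := by
  have A : a ∈ Set.Icc a b := ⟨le_rfl, by linarith⟩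
  have B : b ∈ Set.Icc a b := ⟨by linarith, le_rfl⟩
  have T : t ∈ Set.Icc a b := ⟨h1.le, h2.le⟩
  rcases hm with hm | hm
  · linarith [hm T B h2]
  · linarith [hm A T h1]

lemma sign_nonneg_of_eq {a b : ℝ} (h : SignType.sign a = SignType.sign b) (ha : 0 ≤ a) : 0 ≤ b := by
  rwa [← sign_nonneg_iff, ← h, sign_nonneg_iff]
lemma sign_nonpos_of_eq {a b : ℝ} (h : SignType.sign a = SignType.sign b) (ha : a ≤ 0) : b ≤ 0 := by
  rwa [← sign_nonpos_iff, ← h, sign_nonpos_iff]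
lemma sign_pos_of_eq {a b : ℝ} (h : SignType.sign a = SignType.sign b) (ha : 0 < a) : 0 < b := by
  rwa [← sign_eq_one_iff, ← h, sign_eq_one_iff]
lemma sign_neg_of_eq {a b : ℝ} (h : SignType.sign a = SignType.sign b) (ha : a < 0) : b < 0 := by
  rwa [← sign_eq_neg_one_iff, ← h, sign_eq_neg_one_iff]
lemma sign_zero_of_eq {a b : ℝ} (h : SignType.sign a = SignType.sign b) (ha : a = 0) : b = 0 := by
  rwa [← sign_eq_zero_iff, ← h, sign_eq_zero_iff]

lemma glue (Z : Finset ℝ) (f k : ℝ → ℝ) (hf : Continuous f) (hk : Continuous k)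
    (hfi : ∀ u v, u < v → (∀ z ∈ Z, ¬ (u < z ∧ z < v)) → f u ≠ f v)
    (hki : ∀ u v, u < v → (∀ z ∈ Z, ¬ (u < z ∧ z < v)) → k u ≠ k v)
    (hs : ∀ z ∈ Z, SignType.sign (f z) = SignType.sign (k z))
    (R : Finset ℝ) (hR : ∀ t, f t = 0 → t ∈ R)
    (m M : ℝ) (hm : m ∈ Z) (hM : M ∈ Z) (s s' : SignType) (hs0 : s ≠ 0) (hs0' : s' ≠ 0)
    (hfm : ∀ t ≤ m, SignType.sign (f t) = s) (hkm : ∀ t ≤ m, SignType.sign (k t) = s)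
    (hfM : ∀ t ≥ M, SignType.sign (f t) = s') (hkM : ∀ t ≥ M, SignType.sign (k t) = s') :
    ∃ g : ℝ ≃o ℝ, (∀ z ∈ Z, g z = z) ∧ ∀ t, SignType.sign (f t) = SignType.sign (k (g t)) := by
  classical
  have key : ∀ R0 : Finset ℝ, (∀ t ∈ R0, f t = 0) →
      ∃ g : ℝ ≃o ℝ, (∀ z ∈ Z, g z = z) ∧ ∀ t ∈ R0, k (g t) = 0 := by
    intro R0
    induction R0 using Finset.induction_on with
    | empty => intro _; exact ⟨OrderIso.refl ℝ, fun _ _ => rfl, by simp⟩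
    | insert c R0 hc ih =>
      intro hR0
      obtain ⟨g, hgZ, hgR⟩ := ih (fun t ht => hR0 t (Finset.mem_insert_of_mem ht))
      have hfc : f c = 0 := hR0 c (Finset.mem_insert_self _ _)
      by_cases hcZ : c ∈ Z
      · refine ⟨g, hgZ, fun t ht => ?_⟩
        rcases Finset.mem_insert.1 ht with rfl | ht
        · rw [hgZ _ hcZ]; exact sign_zero_of_eq (hs _ hcZ) hfc
        · exact hgR t ht
      have hmc : m < c := by
        by_contra hh
        exact hs0 (by rw [← hfm c (not_lt.1 hh), hfc, sign_zero])
      have hcM : c < M := by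
        by_contra hh
        exact hs0' (by rw [← hfM c (not_lt.1 hh), hfc, sign_zero])
      obtain ⟨a, ha, b, hb, hac, hcb, hgap⟩ := neighbors Z m M hm hM c hcZ hmc hcM
      have hab := hac.trans hcb
      have fm := gap_mono Z f hf hfi a b hab hgap
      have hd : ∃ d, a < d ∧ d < b ∧ k d = 0 := by
        by_cases h1 : 0 ≤ f a
        · by_cases h2 : 0 ≤ f b
          · linarith [sign_interior_pos f a b c hac hcb fm h1 h2]
          · have h1' : 0 < f a := by
              by_contra hh
              linarith [sign_interior_neg f a b c hac hcb fm (by linarith) (by linarith)]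
            have k1 := sign_pos_of_eq (hs a ha) h1'
            have k2 := sign_neg_of_eq (hs b hb) (not_le.1 h2)
            obtain ⟨d, hd, hd0⟩ := intermediate_value_Ioo' hab.le hk.continuousOn ⟨k2, k1⟩
            exact ⟨d, hd.1, hd.2, hd0⟩
        · have h1 := not_le.1 h1
          have h2 : 0 < f b := by
            by_contra hh
            linarith [sign_interior_neg f a b c hac hcb fm (by linarith) (by linarith)]
          have k1 := sign_neg_of_eq (hs a ha) h1
          have k2 := sign_pos_of_eq (hs b hb) h2
          obtain ⟨d, hd, hd0⟩ := intermediate_value_Ioo hab.le hk.continuousOn ⟨k1, k2⟩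
          exact ⟨d, hd.1, hd.2, hd0⟩
      obtain ⟨d, had, hdb, hkd⟩ := hd
      have hga : a < g c := by rw [← hgZ a ha]; exact g.lt_iff_lt.2 hac
      have hgb : g c < b := by rw [← hgZ b hb]; exact g.lt_iff_lt.2 hcb
      obtain ⟨g', hg'c, hg'⟩ := bump (Z ∪ R0.image g) (g c) d (by
        intro z hz ⟨hz1, hz2⟩
        have z1 : a < z := lt_of_lt_of_le (lt_min hga had) hz1
        have z2 : z < b := lt_of_le_of_lt hz2 (max_lt hgb hdb)
        rcases Finset.mem_union.1 hz with hz | hz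
        · exact hgap z hz ⟨z1, z2⟩
        · obtain ⟨r, hr, rfl⟩ := Finset.mem_image.1 hz
          have hfr := hR0 r (Finset.mem_insert_of_mem hr)
          rw [← hgZ a ha] at z1
          rw [← hgZ b hb] at z2
          have r1 := g.lt_iff_lt.1 z1
          have r2 := g.lt_iff_lt.1 z2
          have hne : r ≠ c := by rintro rfl; exact hc hr
          rcases lt_or_gt_of_ne hne with h | h
          · exact hfi r c h (fun w hw hh => hgap w hw ⟨by linarith, by linarith⟩) (by rw [hfr, hfc])
          · exact hfi c r h (fun w hw hh => hgap w hw ⟨by linarith, by linarith⟩) (by rw [hfr, hfc]))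
      refine ⟨g.trans g', fun z hz => ?_, fun t ht => ?_⟩
      · rw [OrderIso.trans_apply, hgZ z hz, hg' z (Finset.mem_union_left _ hz)]
      · rw [OrderIso.trans_apply]
        rcases Finset.mem_insert.1 ht with rfl | ht
        · rw [hg'c, hkd]
        · rw [hg' _ (Finset.mem_union_right _ (Finset.mem_image_of_mem _ ht)), hgR t ht]
  obtain ⟨g, hgZ, hgR⟩ := key (R.filter (fun t => f t = 0)) (by simp)
  have hgR' : ∀ t, f t = 0 → k (g t) = 0 := fun t ht => hgR t (by simp [hR t ht, ht])
  refine ⟨g, hgZ, fun t => ?_⟩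
  by_cases htZ : t ∈ Z
  · rw [hgZ t htZ, hs t htZ]
  rcases le_or_gt t m with htm | htm
  · rw [hfm t htm, hkm]
    rw [← hgZ m hm]; exact g.le_iff_le.2 htm
  rcases le_or_gt M t with htM | htM
  · rw [hfM t htM, hkM]
    have := g.le_iff_le.2 htM
    rwa [hgZ M hM] at this
  obtain ⟨a, ha, b, hb, hat, htb, hgap⟩ := neighbors Z m M hm hM t htZ htm htM
  have hab := hat.trans htb
  have fm := gap_mono Z f hf hfi a b hab hgap
  have km := gap_mono Z k hk hki a b hab hgap
  have hga : ∀ {u}, a < u → a < g u := fun {u} hu => by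
    have := g.lt_iff_lt.2 hu
    rwa [hgZ a ha] at this
  have hgb : ∀ {u}, u < b → g u < b := fun {u} hu => by
    have := g.lt_iff_lt.2 hu
    rwa [hgZ b hb] at this
  have sa := hs a ha
  have sb := hs b hb
  have A : a ∈ Set.Icc a b := ⟨le_rfl, hab.le⟩
  have B : b ∈ Set.Icc a b := ⟨hab.le, le_rfl⟩
  have T : t ∈ Set.Icc a b := ⟨hat.le, htb.le⟩
  have GT : g t ∈ Set.Icc a b := ⟨(hga hat).le, (hgb htb).le⟩
  by_cases h1 : 0 ≤ f a ∧ 0 ≤ f b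
  · rw [sign_pos (sign_interior_pos f a b t hat htb fm h1.1 h1.2),
      sign_pos (sign_interior_pos k a b (g t) (hga hat) (hgb htb) km
        (sign_nonneg_of_eq sa h1.1) (sign_nonneg_of_eq sb h1.2))]
  by_cases h2 : f a ≤ 0 ∧ f b ≤ 0
  · rw [sign_neg (sign_interior_neg f a b t hat htb fm h2.1 h2.2),
      sign_neg (sign_interior_neg k a b (g t) (hga hat) (hgb htb) km
        (sign_nonpos_of_eq sa h2.1) (sign_nonpos_of_eq sb h2.2))]
  rcases lt_or_ge (f a) 0 with h3 | h3
  · have h4 : 0 < f b := by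
      by_contra hh
      exact h2 ⟨h3.le, not_lt.1 hh⟩
    have k3 := sign_neg_of_eq sa h3
    have k4 := sign_pos_of_eq sb h4
    have fm' : StrictMonoOn f (Set.Icc a b) := fm.resolve_right (fun h => by linarith [h A B hab])
    have km' : StrictMonoOn k (Set.Icc a b) := km.resolve_right (fun h => by linarith [h A B hab])
    obtain ⟨c, hc, hc0⟩ := intermediate_value_Ioo hab.le hf.continuousOn ⟨h3, h4⟩
    have hgc0 := hgR' c hc0
    have C : c ∈ Set.Icc a b := ⟨hc.1.le, hc.2.le⟩
    have GC : g c ∈ Set.Icc a b := ⟨(hga hc.1).le, (hgb hc.2).le⟩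
    rcases lt_trichotomy t c with h | rfl | h
    · have e1 := fm' T C h
      have e2 := km' GT GC (g.lt_iff_lt.2 h)
      rw [sign_neg (by linarith), sign_neg (by linarith)]
    · rw [hc0, hgc0]
    · have e1 := fm' C T h
      have e2 := km' GC GT (g.lt_iff_lt.2 h)
      rw [sign_pos (by linarith), sign_pos (by linarith)]
  · have h4 : f b < 0 := by
      by_contra hh
      exact h1 ⟨h3, not_lt.1 hh⟩
    have h3 : 0 < f a := by
      by_contra hh
      exact h2 ⟨not_lt.1 hh, h4.le⟩
    have k3 := sign_pos_of_eq sa h3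
    have k4 := sign_neg_of_eq sb h4
    have fm' : StrictAntiOn f (Set.Icc a b) := fm.resolve_left (fun h => by linarith [h A B hab])
    have km' : StrictAntiOn k (Set.Icc a b) := km.resolve_left (fun h => by linarith [h A B hab])
    obtain ⟨c, hc, hc0⟩ := intermediate_value_Ioo' hab.le hf.continuousOn ⟨h4, h3⟩
    have hgc0 := hgR' c hc0
    have C : c ∈ Set.Icc a b := ⟨hc.1.le, hc.2.le⟩
    have GC : g c ∈ Set.Icc a b := ⟨(hga hc.1).le, (hgb hc.2).le⟩
    rcases lt_trichotomy t c with h | rfl | h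
    · have e1 := fm' T C h
      have e2 := km' GT GC (g.lt_iff_lt.2 h)
      rw [sign_pos (by linarith), sign_pos (by linarith)]
    · rw [hc0, hgc0]
    · have e1 := fm' C T h
      have e2 := km' GC GT (g.lt_iff_lt.2 h)
      rw [sign_neg (by linarith), sign_neg (by linarith)]

lemma sign_top (p : ℝ[X]) (hp : 0 < p.natDegree) :
    ∀ᶠ t in Filter.atTop, SignType.sign (p.eval t) = SignType.sign p.leadingCoeff := by
  have hd : 0 < p.degree := natDegree_pos_iff_degree_pos.1 hp
  have h0 : p.leadingCoeff ≠ 0 := by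
    rw [Ne, leadingCoeff_eq_zero]; rintro rfl; simp at hp
  rcases lt_or_gt_of_ne h0 with h | h
  · filter_upwards [(p.tendsto_atBot_of_leadingCoeff_nonpos hd h.le).eventually_lt_atBot 0] with t ht
    rw [sign_neg ht, sign_neg h]
  · filter_upwards [(p.tendsto_atTop_of_leadingCoeff_nonneg hd h.le).eventually_gt_atTop 0] with t ht
    rw [sign_pos ht, sign_pos h]

lemma sign_bot (p : ℝ[X]) (hp : 0 < p.natDegree) :
    ∀ᶠ t in Filter.atBot,
      SignType.sign (p.eval t) = SignType.sign (p.leadingCoeff * (-1) ^ p.natDegree) := by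
  have hX : (-X : ℝ[X]).natDegree = 1 := by simp
  have h1 : 0 < (p.comp (-X)).natDegree := by rw [natDegree_comp, hX]; simpa using hp
  have h2 : (p.comp (-X)).leadingCoeff = p.leadingCoeff * (-1) ^ p.natDegree := by
    rw [leadingCoeff_comp (by rw [hX]; simp)]; simp
  have h := Filter.tendsto_neg_atBot_atTop.eventually (sign_top _ h1)
  filter_upwards [h] with t ht
  rw [h2] at ht
  simpa using ht

section
variable {A : Type*} [CommRing A]

lemma pseudo_div (b : A[X]) (j : ℕ) (hj : 0 < j) (hb : b.natDegree ≤ j) (n : ℕ) :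
    ∀ p : A[X], p.natDegree ≤ n →
      ∃ (k : ℕ) (s r : A[X]), C (b.coeff j) ^ k * p = b * s + r ∧ r.natDegree < j := by
  induction n with
  | zero => intro p hp; exact ⟨0, 0, p, by simp, by omega⟩
  | succ n ih =>
    intro p hp
    by_cases hpj : p.natDegree < j
    · exact ⟨0, 0, p, by simp, hpj⟩
    by_cases hpn : p.natDegree ≤ n
    · exact ih p hpn
    have hn : p.natDegree = n + 1 := by omega
    set u : A[X] := C (p.coeff (n + 1)) * X ^ (n + 1 - j) with hu
    have hdeg : (C (b.coeff j) * p - b * u).natDegree ≤ n := by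
      rw [natDegree_le_iff_coeff_eq_zero]
      intro i hi
      have e : b * u = C (p.coeff (n + 1)) * (b * X ^ (n + 1 - j)) := by rw [hu]; ring
      rw [coeff_sub, e, coeff_C_mul, coeff_C_mul, coeff_mul_X_pow', if_pos (by omega)]
      rcases Nat.lt_or_ge (n + 1) i with h | h
      · rw [coeff_eq_zero_of_natDegree_lt (by omega : p.natDegree < i),
          coeff_eq_zero_of_natDegree_lt (by omega : b.natDegree < i - (n + 1 - j))]
        simp
      · have : i = n + 1 := by omega
        subst this
        rw [show n + 1 - (n + 1 - j) = j by omega]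
        ring
    obtain ⟨k, s, r, h1, h2⟩ := ih _ hdeg
    refine ⟨k + 1, s + C (b.coeff j) ^ k * u, r, ?_, h2⟩
    linear_combination h1

/-- Truncation. -/
noncomputable def trunc' (q : A[X]) (j : ℕ) : A[X] :=
  ∑ i ∈ Finset.range (j + 1), monomial i (q.coeff i)

lemma coeff_trunc' (q : A[X]) (j n : ℕ) :
    (trunc' q j).coeff n = if n ≤ j then q.coeff n else 0 := by
  simp [trunc', coeff_monomial]

lemma natDegree_trunc' (q : A[X]) (j : ℕ) : (trunc' q j).natDegree ≤ j := by
  rw [natDegree_le_iff_coeff_eq_zero]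
  intro i hi
  rw [coeff_trunc', if_neg (by omega)]

lemma map_trunc' (q : A[X]) (j : ℕ) (x : A →+* ℝ) (h : ∀ n, j < n → x (q.coeff n) = 0) :
    (trunc' q j).map x = q.map x := by
  ext n
  rw [coeff_map, coeff_map, coeff_trunc']
  split_ifs with hn
  · rfl
  · rw [h n (by omega), map_zero]

lemma match_step [DecidableEq A[X]] (x y : A →+* ℝ) (d : ℕ) (p : A[X]) (B : Finset A[X]) (h : ℝ ≃o ℝ)
    (hp : p.natDegree ≤ d + 1)
    (hpB : derivative p ∈ B)
    (hB : ∀ q ∈ B, ∀ t, SignType.sign ((q.map x).eval t) = SignType.sign ((q.map y).eval (h t)))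
    (hco : ∀ q ∈ B, ∀ n, SignType.sign (x (q.coeff n)) = SignType.sign (y (q.coeff n)))
    (hlc : SignType.sign (x (p.coeff (d + 1))) = SignType.sign (y (p.coeff (d + 1))))
    (hlc0 : x (p.coeff (d + 1)) ≠ 0)
    (hrem : ∀ q ∈ B, ∀ j, 0 < j → j ≤ q.natDegree → ∃ (k : ℕ) (s r : A[X]),
      C (q.coeff j) ^ k * p = trunc' q j * s + r ∧
      ∀ t, SignType.sign ((r.map x).eval t) = SignType.sign ((r.map y).eval (h t))) :
    ∃ h' : ℝ ≃o ℝ, ∀ q ∈ insert p B, ∀ t,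
      SignType.sign ((q.map x).eval t) = SignType.sign ((q.map y).eval (h' t)) := by
  classical
  have hlc0' : y (p.coeff (d + 1)) ≠ 0 := fun hh => hlc0 (sign_zero_of_eq hlc.symm hh)
  have hdx : (p.map x).natDegree = d + 1 :=
    le_antisymm (natDegree_map_le.trans hp) (le_natDegree_of_ne_zero (by rwa [coeff_map]))
  have hdy : (p.map y).natDegree = d + 1 :=
    le_antisymm (natDegree_map_le.trans hp) (le_natDegree_of_ne_zero (by rwa [coeff_map]))
  have hlx : (p.map x).leadingCoeff = x (p.coeff (d + 1)) := by
    rw [leadingCoeff, hdx, coeff_map]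
  have hly : (p.map y).leadingCoeff = y (p.coeff (d + 1)) := by
    rw [leadingCoeff, hdy, coeff_map]
  have hpx0 : p.map x ≠ 0 := by rintro hh; rw [hh] at hdx; simp at hdx
  have tx := sign_top (p.map x) (by omega)
  have bx := sign_bot (p.map x) (by omega)
  have ty := h.tendsto_atTop.eventually (sign_top (p.map y) (by omega))
  have bY := h.tendsto_atBot.eventually (sign_bot (p.map y) (by omega))
  rw [hlx] at tx
  rw [hly, ← hlc] at ty
  rw [hlx, hdx, sign_mul] at bx
  rw [hly, hdy, sign_mul, ← hlc, ← sign_mul] at bY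
  rw [← sign_mul] at bx
  obtain ⟨M, hM⟩ := Filter.eventually_atTop.1 (tx.and ty)
  obtain ⟨m, hm⟩ := Filter.eventually_atBot.1 (bx.and bY)
  set Z : Finset ℝ := insert m (insert M (B.biUnion (fun q => (q.map x).roots.toFinset))) with hZ
  have hmZ : m ∈ Z := by simp [hZ]
  have hMZ : M ∈ Z := by simp [hZ]
  have hrZ : ∀ q ∈ B, q.map x ≠ 0 → ∀ z, (q.map x).eval z = 0 → z ∈ Z := by
    intro q hq hq0 z hz
    refine Finset.mem_insert_of_mem (Finset.mem_insert_of_mem (Finset.mem_biUnion.2 ⟨q, hq, ?_⟩))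
    rw [Multiset.mem_toFinset, mem_roots hq0]
    exact hz
  have hzero : ∀ q ∈ B, q.map x = 0 → q.map y = 0 := by
    intro q hq h0
    ext n
    have h1 := hco q hq n
    have h2 : x (q.coeff n) = 0 := by rw [← coeff_map, h0, coeff_zero]
    rw [coeff_map, coeff_zero]
    exact sign_zero_of_eq h1 h2
  have hder0 : (derivative p).map x ≠ 0 := by
    intro hh
    rw [← derivative_map] at hh
    have := derivative_eq_zero.1 hh
    omega
  have hs : ∀ z ∈ Z, SignType.sign ((p.map x).eval z) = SignType.sign ((p.map y).eval (h z)) := by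
    intro z hz
    rcases Finset.mem_insert.1 hz with rfl | hz
    · rw [(hm z le_rfl).1, (hm z le_rfl).2]
    rcases Finset.mem_insert.1 hz with rfl | hz
    · rw [(hM z le_rfl).1, (hM z le_rfl).2]
    obtain ⟨q, hq, hz⟩ := Finset.mem_biUnion.1 hz
    rw [Multiset.mem_toFinset] at hz
    have hq0 : q.map x ≠ 0 := by intro hh; rw [hh] at hz; simp at hz
    rw [mem_roots hq0, IsRoot.def] at hz
    have hzy := sign_zero_of_eq (hB q hq z) hz
    set j := (q.map x).natDegree with hj
    have hjpos : 0 < j := by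
      by_contra hh
      have hj0 : (q.map x).natDegree = 0 := by omega
      rw [eq_C_of_natDegree_eq_zero hj0, eval_C] at hz
      apply hq0
      rw [eq_C_of_natDegree_eq_zero hj0, hz, C_0]
    have hcx : x (q.coeff j) ≠ 0 := by
      rw [← coeff_map]
      exact leadingCoeff_ne_zero.2 hq0
    have hcy : y (q.coeff j) ≠ 0 := fun hh => hcx (sign_zero_of_eq (hco q hq j).symm hh)
    have hvx : ∀ n, j < n → x (q.coeff n) = 0 := by
      intro n hn
      rw [← coeff_map]
      exact coeff_eq_zero_of_natDegree_lt hn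
    have hvy : ∀ n, j < n → y (q.coeff n) = 0 := fun n hn =>
      sign_zero_of_eq (hco q hq n) (hvx n hn)
    obtain ⟨k, s, r, he, hr⟩ := hrem q hq j hjpos natDegree_map_le
    have ex := congrArg (fun w => (w.map x).eval z) he
    have ey := congrArg (fun w => (w.map y).eval (h z)) he
    simp only [Polynomial.map_mul, Polynomial.map_pow, Polynomial.map_add, map_C, eval_mul,
      eval_pow, eval_add, eval_C, map_trunc' q j x hvx, map_trunc' q j y hvy, hz, hzy,
      zero_mul, zero_add] at ex ey
    have h1 := hr z
    rw [← ex, ← ey, sign_mul, sign_mul, sign_pow, sign_pow, ← hco q hq j] at h1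
    exact mul_left_cancel₀ (pow_ne_zero _ (by rwa [Ne, sign_eq_zero_iff])) h1
  have rolle : ∀ (w : ℝ[X]) (u v : ℝ), u < v → w.eval u = w.eval v →
      ∃ z, u < z ∧ z < v ∧ (derivative w).eval z = 0 := by
    intro w u v huv he
    obtain ⟨z, hz, hz0⟩ := exists_deriv_eq_zero huv w.continuous.continuousOn he
    rw [Polynomial.deriv] at hz0
    exact ⟨z, hz.1, hz.2, hz0⟩
  obtain ⟨g, hgZ, hg⟩ := glue Z (fun t => (p.map x).eval t) (fun t => (p.map y).eval (h t))
    (p.map x).continuous ((p.map y).continuous.comp h.continuous)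
    (by
      intro u v huv hgap he
      obtain ⟨z, hz1, hz2, hz⟩ := rolle _ u v huv he
      rw [derivative_map] at hz
      exact hgap z (hrZ _ hpB hder0 z hz) ⟨hz1, hz2⟩)
    (by
      intro u v huv hgap he
      obtain ⟨z, hz1, hz2, hz⟩ := rolle _ (h u) (h v) (h.lt_iff_lt.2 huv) he
      rw [derivative_map] at hz
      obtain ⟨z, rfl⟩ := h.surjective z
      exact hgap z (hrZ _ hpB hder0 z (sign_zero_of_eq (hB _ hpB z).symm hz))
        ⟨h.lt_iff_lt.1 hz1, h.lt_iff_lt.1 hz2⟩)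
    hs (p.map x).roots.toFinset
    (by intro t ht; rw [Multiset.mem_toFinset, mem_roots hpx0]; exact ht)
    m M hmZ hMZ _ _
    (by rw [Ne, sign_eq_zero_iff]; exact mul_ne_zero hlc0 (pow_ne_zero _ (by norm_num)))
    (by rw [Ne, sign_eq_zero_iff]; exact hlc0)
    (fun t ht => (hm t ht).1) (fun t ht => (hm t ht).2)
    (fun t ht => (hM t ht).1) (fun t ht => (hM t ht).2)
  refine ⟨g.trans h, fun q hq t => ?_⟩
  rw [OrderIso.trans_apply]
  rcases Finset.mem_insert.1 hq with rfl | hq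
  · exact hg t
  · by_cases hq0 : q.map x = 0
    · rw [hq0, hzero q hq hq0]; simp
    · rw [← hB q hq (g t)]
      exact (sign_comp_fix (fun t => (q.map x).eval t) (q.map x).continuous g
        (fun z hz => hgZ z (hrZ q hq hq0 z hz)) t).symm

/-- Uniform finiteness of sign diagrams. -/
def GoodSet (P : Finset A[X]) : Prop :=
  ∃ F : Finset A, ∀ x y : A →+* ℝ, (∀ a ∈ F, SignType.sign (x a) = SignType.sign (y a)) →
    ∃ h : ℝ ≃o ℝ, ∀ p ∈ P, ∀ t,
      SignType.sign ((p.map x).eval t) = SignType.sign ((p.map y).eval (h t))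

lemma GoodSet.mono {P Q : Finset A[X]} (h : P ⊆ Q) (hQ : GoodSet Q) : GoodSet P := by
  obtain ⟨F, hF⟩ := hQ
  refine ⟨F, fun x y hxy => ?_⟩
  obtain ⟨g, hg⟩ := hF x y hxy
  exact ⟨g, fun p hp => hg p (h hp)⟩

lemma good_step [DecidableEq A] [DecidableEq A[X]] (d : ℕ)
    (ih : ∀ Q : Finset A[X], (∀ q ∈ Q, q.natDegree ≤ d) → GoodSet Q) (P : Finset A[X]) :
    (∀ q ∈ P, q.natDegree ≤ d + 1) → ∀ Q : Finset A[X], (∀ q ∈ Q, q.natDegree ≤ d) →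
      GoodSet (P ∪ Q) := by
  induction P using Finset.induction_on with
  | empty => intro _ Q hQ; simpa using ih Q hQ
  | insert p P hpP ihP =>
    intro hP Q hQ
    have hp := hP p (Finset.mem_insert_self _ _)
    have hP' : ∀ q ∈ P, q.natDegree ≤ d + 1 := fun q hq => hP q (Finset.mem_insert_of_mem hq)
    set B : Finset A[X] := insert (derivative p) (P ∪ Q) with hBdef
    have hder : (derivative p).natDegree ≤ d := by
      have := natDegree_derivative_le p
      omega
    have hBdeg : ∀ q ∈ B, q.natDegree ≤ d + 1 := by
      intro q hq
      rcases Finset.mem_insert.1 hq with rfl | hq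
      · omega
      rcases Finset.mem_union.1 hq with hq | hq
      · exact hP' q hq
      · have := hQ q hq; omega
    have hdiv : ∀ (q : A[X]) (j : ℕ), ∃ r : A[X], 0 < j → (∃ (k : ℕ) (s : A[X]),
        C (q.coeff j) ^ k * p = trunc' q j * s + r) ∧ r.natDegree < j := by
      intro q j
      by_cases hj : 0 < j
      · obtain ⟨k, s, r, h1, h2⟩ := pseudo_div (trunc' q j) j hj (natDegree_trunc' q j) _ p le_rfl
        rw [coeff_trunc', if_pos le_rfl] at h1
        exact ⟨r, fun _ => ⟨⟨k, s, h1⟩, h2⟩⟩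
      · exact ⟨0, fun h => absurd h hj⟩
    choose rem hrem using hdiv
    set Rm : Finset A[X] := B.biUnion (fun q => (Finset.Icc 1 (d + 1)).image (rem q)) with hRm
    set Q' : Finset A[X] := insert (derivative p) (insert (trunc' p d) (Q ∪ Rm)) with hQ'
    obtain ⟨F, hF⟩ := ihP hP' Q' (by
      intro q hq
      rcases Finset.mem_insert.1 hq with rfl | hq
      · exact hder
      rcases Finset.mem_insert.1 hq with rfl | hq
      · exact natDegree_trunc' p d
      rcases Finset.mem_union.1 hq with hq | hq
      · exact hQ q hq
      · obtain ⟨q', hq', hq⟩ := Finset.mem_biUnion.1 hq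
        obtain ⟨j, hj, rfl⟩ := Finset.mem_image.1 hq
        rw [Finset.mem_Icc] at hj
        have := (hrem q' j (by omega)).2
        omega)
    refine ⟨F ∪ (insert p B).biUnion (fun q => (Finset.range (d + 2)).image q.coeff),
      fun x y hxy => ?_⟩
    obtain ⟨h, hh⟩ := hF x y (fun a ha => hxy a (Finset.mem_union_left _ ha))
    have hco : ∀ q ∈ insert p B, ∀ n,
        SignType.sign (x (q.coeff n)) = SignType.sign (y (q.coeff n)) := by
      intro q hq n
      rcases Nat.lt_or_ge n (d + 2) with hn | hn
      · apply hxy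
        refine Finset.mem_union_right _ (Finset.mem_biUnion.2 ⟨q, hq, ?_⟩)
        exact Finset.mem_image_of_mem _ (Finset.mem_range.2 hn)
      · have hq' : q.natDegree ≤ d + 1 := by
          rcases Finset.mem_insert.1 hq with rfl | hq
          · exact hp
          · exact hBdeg q hq
        rw [coeff_eq_zero_of_natDegree_lt (by omega), map_zero x, map_zero y]
    have hB : ∀ q ∈ B, ∀ t,
        SignType.sign ((q.map x).eval t) = SignType.sign ((q.map y).eval (h t)) := by
      intro q hq
      apply hh
      rcases Finset.mem_insert.1 hq with rfl | hq
      · simp [hQ']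
      rcases Finset.mem_union.1 hq with hq | hq
      · simp [hq]
      · simp [hQ', hq]
    have hsub : insert p P ∪ Q ⊆ insert p B := by
      intro q hq
      simp only [hBdef, Finset.mem_union, Finset.mem_insert] at hq ⊢
      tauto
    have hlc := hco p (Finset.mem_insert_self _ _) (d + 1)
    by_cases hlc0 : x (p.coeff (d + 1)) = 0
    · have hlc0' := sign_zero_of_eq hlc hlc0
      have hv : ∀ w : A →+* ℝ, w (p.coeff (d + 1)) = 0 → (trunc' p d).map w = p.map w := by
        intro w hw
        apply map_trunc'
        intro n hn
        rcases Nat.lt_or_ge (d + 1) n with h | h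
        · rw [coeff_eq_zero_of_natDegree_lt (by omega), map_zero]
        · rw [show n = d + 1 by omega, hw]
      refine ⟨h, fun q hq t => ?_⟩
      rcases Finset.mem_insert.1 (hsub hq) with rfl | hq
      · rw [← hv x hlc0, ← hv y hlc0']
        exact hh _ (by simp [hQ']) t
      · exact hB q hq t
    · obtain ⟨h', hh'⟩ := match_step x y d p B h hp (by simp [hBdef]) hB
        (fun q hq => hco q (Finset.mem_insert_of_mem hq)) hlc hlc0 (by
          intro q hq j hj hjq
          obtain ⟨k, s, hks⟩ := (hrem q j hj).1
          refine ⟨k, s, rem q j, hks, hh _ ?_⟩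
          have : rem q j ∈ Rm := Finset.mem_biUnion.2 ⟨q, hq, Finset.mem_image_of_mem _
            (Finset.mem_Icc.2 ⟨hj, hjq.trans (hBdeg q hq)⟩)⟩
          simp [hQ', this])
      exact ⟨h', fun q hq => hh' q (hsub hq)⟩

lemma good_of_degree (d : ℕ) :
    ∀ Q : Finset A[X], (∀ q ∈ Q, q.natDegree ≤ d) → GoodSet Q := by
  classical
  induction d with
  | zero =>
    intro Q hQ
    refine ⟨Q.image (fun q => q.coeff 0), fun x y hxy => ⟨OrderIso.refl ℝ, fun q hq t => ?_⟩⟩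
    rw [eq_C_of_natDegree_le_zero (hQ q hq)]
    simpa using hxy _ (Finset.mem_image_of_mem _ hq)
  | succ d ih =>
    intro Q hQ
    simpa using good_step d ih Q hQ ∅ (by simp)

lemma good_all (Q : Finset A[X]) : GoodSet Q :=
  good_of_degree (Q.sup natDegree) Q (fun _ hq => Finset.le_sup (f := natDegree) hq)

end

section
attribute [local instance] realOrderedRingStructure

lemma term_poly {β : Type*} (t : (Language.ring.sum Language.order).Term β) :
    ∃ q : MvPolynomial β ℝ, ∀ v : β → ℝ, t.realize v = MvPolynomial.eval v q := by
  induction t with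
  | var b => exact ⟨MvPolynomial.X b, fun v => by simp⟩
  | func f ts ih =>
    choose q hq using ih
    rcases f with f | f
    · cases f with
      | add =>
        refine ⟨q 0 + q 1, fun v => ?_⟩
        rw [map_add, ← hq, ← hq]; rfl
      | mul =>
        refine ⟨q 0 * q 1, fun v => ?_⟩
        rw [map_mul, ← hq, ← hq]; rfl
      | neg =>
        refine ⟨- q 0, fun v => ?_⟩
        rw [map_neg, ← hq]; rfl
      | zero =>
        refine ⟨0, fun v => ?_⟩
        rw [map_zero]; rfl
      | one =>
        refine ⟨1, fun v => ?_⟩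
        rw [map_one]; rfl
    · exact isEmptyElim f

/-- View a polynomial with one more bound variable as a univariate polynomial. -/
noncomputable def toUni (α : Type*) (n : ℕ) :
    MvPolynomial (α ⊕ Fin (n + 1)) ℝ →ₐ[ℝ] (MvPolynomial (α ⊕ Fin n) ℝ)[X] :=
  MvPolynomial.aeval (Sum.elim (fun a => C (MvPolynomial.X (Sum.inl a)))
    (Fin.snoc (α := fun _ => (MvPolynomial (α ⊕ Fin n) ℝ)[X])
      (fun i => C (MvPolynomial.X (Sum.inr i))) X))

lemma eval_toUni {α : Type*} {n : ℕ} (q : MvPolynomial (α ⊕ Fin (n + 1)) ℝ)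
    (v : α → ℝ) (xs : Fin n → ℝ) (a : ℝ) :
    ((toUni α n q).map (MvPolynomial.eval (Sum.elim v xs))).eval a =
      MvPolynomial.eval (Sum.elim v (Fin.snoc (α := fun _ => ℝ) xs a)) q := by
  induction q using MvPolynomial.induction_on with
  | C r =>
    rw [MvPolynomial.eval_C, ← MvPolynomial.algebraMap_eq, AlgHom.commutes,
      Polynomial.algebraMap_apply, map_C, eval_C, MvPolynomial.algebraMap_eq, MvPolynomial.eval_C]
  | add p q hp hq => simp only [map_add, Polynomial.map_add, eval_add, hp, hq]
  | mul_X p i hp =>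
    rw [map_mul, Polynomial.map_mul, eval_mul, hp, map_mul, MvPolynomial.eval_X]
    congr 1
    rw [toUni, MvPolynomial.aeval_X]
    rcases i with i | i
    · simp
    · refine Fin.lastCases ?_ (fun i => ?_) i
      · simp
      · simp

lemma formula_tame {α : Type*} {n : ℕ}
    (φ : (Language.ring.sum Language.order).BoundedFormula α n) :
    ∃ F : Finset (MvPolynomial (α ⊕ Fin n) ℝ), ∀ (v w : α → ℝ) (xs ys : Fin n → ℝ),
      (∀ f ∈ F, SignType.sign (MvPolynomial.eval (Sum.elim v xs) f) =
        SignType.sign (MvPolynomial.eval (Sum.elim w ys) f)) →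
      (φ.Realize v xs ↔ φ.Realize w ys) := by
  classical
  induction φ with
  | falsum => exact ⟨∅, fun v w xs ys _ => Iff.rfl⟩
  | equal t₁ t₂ =>
    obtain ⟨q₁, h₁⟩ := term_poly t₁
    obtain ⟨q₂, h₂⟩ := term_poly t₂
    refine ⟨{q₁ - q₂}, fun v w xs ys h => ?_⟩
    have h := h _ (Finset.mem_singleton_self _)
    change t₁.realize (Sum.elim v xs) = t₂.realize (Sum.elim v xs) ↔
      t₁.realize (Sum.elim w ys) = t₂.realize (Sum.elim w ys)
    rw [h₁, h₂, h₁, h₂, ← sub_eq_zero, ← map_sub, ← sign_eq_zero_iff, h, sign_eq_zero_iff,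
      map_sub, sub_eq_zero]
  | rel R ts =>
    rcases R with R | R
    · exact isEmptyElim R
    · cases R with
      | le =>
        obtain ⟨q₁, h₁⟩ := term_poly (ts 0)
        obtain ⟨q₂, h₂⟩ := term_poly (ts 1)
        refine ⟨{q₁ - q₂}, fun v w xs ys h => ?_⟩
        have h := h _ (Finset.mem_singleton_self _)
        change (ts 0).realize (Sum.elim v xs) ≤ (ts 1).realize (Sum.elim v xs) ↔
          (ts 0).realize (Sum.elim w ys) ≤ (ts 1).realize (Sum.elim w ys)
        rw [h₁, h₂, h₁, h₂, ← sub_nonpos, ← map_sub, ← sign_nonpos_iff, h, sign_nonpos_iff,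
          map_sub, sub_nonpos]
  | imp φ ψ ihφ ihψ =>
    obtain ⟨F, hF⟩ := ihφ
    obtain ⟨G, hG⟩ := ihψ
    refine ⟨F ∪ G, fun v w xs ys h => ?_⟩
    rw [BoundedFormula.realize_imp, BoundedFormula.realize_imp,
      hF v w xs ys (fun f hf => h f (Finset.mem_union_left _ hf)),
      hG v w xs ys (fun f hf => h f (Finset.mem_union_right _ hf))]
  | @all n φ ih =>
    obtain ⟨F, hF⟩ := ih
    obtain ⟨G, hG⟩ := good_all (F.image (toUni α n))
    refine ⟨G, fun v w xs ys h => ?_⟩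
    obtain ⟨g, hg⟩ := hG (MvPolynomial.eval (Sum.elim v xs)) (MvPolynomial.eval (Sum.elim w ys)) h
    have key : ∀ a, φ.Realize v (Fin.snoc xs a) ↔ φ.Realize w (Fin.snoc ys (g a)) := by
      intro a
      apply hF
      intro f hf
      have := hg _ (Finset.mem_image_of_mem _ hf) a
      rwa [eval_toUni, eval_toUni] at this
    rw [BoundedFormula.realize_all, BoundedFormula.realize_all]
    constructor
    · intro H a
      have := (key (g.symm a)).1 (H _)
      rwa [OrderIso.apply_symm_apply] at this
    · intro H a
      exact (key a).2 (H _)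

lemma definable_tame (s : Set ℝ)
    (hdef : (Set.univ : Set ℝ).Definable₁ (Language.ring.sum Language.order) s) :
    ∃ F : Finset ℝ[X], ∀ t u : ℝ,
      (∀ f ∈ F, SignType.sign (f.eval t) = SignType.sign (f.eval u)) → (t ∈ s ↔ u ∈ s) := by
  classical
  rw [Set.Definable₁, Set.definable_iff_exists_formula_sum] at hdef
  obtain ⟨φ, hφ⟩ := hdef
  obtain ⟨F, hF⟩ := formula_tame φ
  let σ : MvPolynomial (((Set.univ : Set ℝ) ⊕ Fin 1) ⊕ Fin 0) ℝ →ₐ[ℝ] ℝ[X] :=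
    MvPolynomial.aeval (Sum.elim (Sum.elim (fun a => C (a : ℝ)) (fun _ => X)) Fin.elim0)
  have hσ : ∀ f t, (σ f).eval t = MvPolynomial.eval
      (Sum.elim (Sum.elim (fun a : (Set.univ : Set ℝ) => (a : ℝ)) (fun _ : Fin 1 => t))
        (default : Fin 0 → ℝ)) f := by
    intro f t
    induction f using MvPolynomial.induction_on with
    | C r =>
      rw [MvPolynomial.eval_C, ← MvPolynomial.algebraMap_eq, AlgHom.commutes]
      simp
    | add p q hp hq => simp only [map_add, eval_add, hp, hq]
    | mul_X p i hp =>
      rw [map_mul, eval_mul, hp, map_mul, MvPolynomial.eval_X]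
      congr 1
      rcases i with (i | i) | i
      · simp [σ]
      · simp [σ]
      · exact i.elim0
  have hmem : ∀ t, t ∈ s ↔ φ.Realize (Sum.elim (fun a : (Set.univ : Set ℝ) => (a : ℝ)) (fun _ : Fin 1 => t)) := by
    intro t
    have := Set.ext_iff.1 hφ (fun _ => t)
    exact this
  refine ⟨F.image σ, fun t u h => ?_⟩
  rw [hmem, hmem]
  apply hF
  intro f hf
  have := h _ (Finset.mem_image_of_mem _ hf)
  rw [hσ, hσ] at this
  convert this

end

end TarskiAux

/-- Every subset of `ℝ` definable with parameters in the ordered field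
`(ℝ, +, ·, 0, 1, ≤)` that has empty interior is finite. -/
theorem real_definable_empty_interior_finite (s : Set ℝ)
    (hdef : @Set.Definable₁ ℝ (Set.univ : Set ℝ) (Language.ring.sum Language.order)
      realOrderedRingStructure s)
    (hint : interior s = ∅) :
    s.Finite := by
  classical
  obtain ⟨F, hF⟩ := definable_tame s hdef
  by_contra hs
  let R : Finset ℝ := F.biUnion (fun f => f.roots.toFinset)
  obtain ⟨t, hts, htR⟩ := Set.Infinite.exists_notMem_finset hs R
  have hmem : t ∈ interior s := by
    rw [mem_interior_iff_mem_nhds]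
    have : ∀ᶠ u in nhds t, ∀ f ∈ F, SignType.sign (f.eval t) = SignType.sign (f.eval u) := by
      rw [Filter.eventually_all_finset]
      intro f hf
      by_cases h0 : f = 0
      · simp [h0]
      have hft : f.eval t ≠ 0 := by
        intro h
        apply htR
        refine Finset.mem_biUnion.2 ⟨f, hf, ?_⟩
        rw [Multiset.mem_toFinset, Polynomial.mem_roots h0]
        exact h
      have hc : Filter.Tendsto (fun u => f.eval u) (nhds t) (nhds (f.eval t)) :=
        f.continuous.tendsto t
      rcases lt_or_gt_of_ne hft with h | h
      · filter_upwards [hc.eventually_lt_const h] with u hu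
        rw [sign_neg h, sign_neg hu]
      · filter_upwards [hc.eventually_const_lt h] with u hu
        rw [sign_pos h, sign_pos hu]
    filter_upwards [this] with u hu
    exact (hF t u hu).1 hts
  rw [hint] at hmem
  exact hmem
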